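/- Let A be a commutative ring, let M be a flat A-module and let d ≥ 0 be an integer. Then the A-module TS^d_A(M) of symmetric tensors of degree d is a flat A-module, and for every commutative A-algebra B the canonical B-linear homomorphism TS^d_A(M) ⊗_A B ⟶ TS^d_B(M ⊗_A B) — induced by the natural map M^{⊗_A d} ⊗_A B ⟶ (M ⊗_A B)^{⊗_B d} sending (m_1 ⊗ ⋯ ⊗ m_d) ⊗ b to (m_1 ⊗ 1) ⊗ ⋯ ⊗ (m_{d-1} ⊗ 1) ⊗ (m_d ⊗ b), which carries symmetric tensors into symmetric tensors — is bijective. -/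

import Mathlib

/-!
By Lazard's theorem a flat module is a filtered colimit of free ones. Here one free module suffices:
let `π : P → M` be a surjection from a free module onto the flat module `M`. If `π p = 0`, this is a
relation in `M` between the images of basis vectors of `P`; flatness trivializes it, which provides
an endomorphism of `P` over `M` killing `p`. So `M` is the filtered colimit of copies of `P` along
the endomorphisms of `P` over `M`.

Such presentations are stable under base change, tensor powers and, as invariance of a tensor under
a finite group is a finite set of equations, symmetric tensors. Since filtered colimits preserve
flatness, injectivity and surjectivity, it remains to treat `P`.

A basis of `P` indexed by a linearly ordered set gives a basis of `P^{⊗d}` consisting of words, and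
symmetric tensors are those whose coefficients do not change when a word is permuted. Replacing the
coefficient at each word by the one at the sorted word is a projection of `P^{⊗d}` onto `TS^d(P)`.
It commutes with base change, and `B ⊗ P^{⊗d} ≃ (B ⊗ P)^{⊗d}`.
-/

open scoped TensorProduct

/-- The `d`-th tensor power `M^{⊗_A d}` of an `A`-module `M`. -/
abbrev TensorPow (A : Type*) [CommRing A] (M : Type*) [AddCommGroup M] [Module A M] (d : ℕ) :=
  PiTensorProduct A (fun _ : Fin d => M)

/-- The submodule `TS^d_A(M)` of symmetric tensors of degree `d`: the tensors in `M^{⊗_A d}`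
fixed by the permutation action of the symmetric group `𝔖_d` on the `d` tensor factors. -/
def symmetricTensors (A : Type*) [CommRing A] (M : Type*) [AddCommGroup M] [Module A M]
    (d : ℕ) : Submodule A (TensorPow A M d) where
  carrier := {x | ∀ σ : Equiv.Perm (Fin d), PiTensorProduct.reindex A (fun _ => M) σ x = x}
  add_mem' := by
    intro a b ha hb σ
    simp only [map_add, ha σ, hb σ]
  zero_mem' := by
    intro σ
    simp
  smul_mem' := by
    intro c x hx σ
    simp only [map_smul, hx σ]

/-- The canonical comparison map `M^{⊗_A d} → (B ⊗_A M)^{⊗_B d}`, sending a pure tensor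
`m_1 ⊗ ⋯ ⊗ m_d` to `(1 ⊗ m_1) ⊗ ⋯ ⊗ (1 ⊗ m_d)`. -/
noncomputable def tensorPowCompare (A : Type*) [CommRing A] (M : Type*) [AddCommGroup M]
    [Module A M] (d : ℕ) (B : Type*) [CommRing B] [Algebra A B] :
    TensorPow A M d →ₗ[A] TensorPow B (B ⊗[A] M) d :=
  PiTensorProduct.lift
    (((PiTensorProduct.tprod B (s := fun _ : Fin d => B ⊗[A] M)).restrictScalars A).compLinearMap
      (fun _ => TensorProduct.mk A B M 1))

/-- The canonical base-change map `B ⊗_A TS^d_A(M) → (B ⊗_A M)^{⊗_B d}`, sending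
`b ⊗ (m_1 ⊗ ⋯ ⊗ m_d)` to `b • ((1 ⊗ m_1) ⊗ ⋯ ⊗ (1 ⊗ m_d))`; its corestriction to
`TS^d_B(B ⊗_A M)` is the canonical base-change comparison map of symmetric tensors. -/
noncomputable def symmetricTensorsBaseChange (A : Type*) [CommRing A] (M : Type*)
    [AddCommGroup M] [Module A M] (d : ℕ) (B : Type*) [CommRing B] [Algebra A B] :
    B ⊗[A] (symmetricTensors A M d) →ₗ[B] TensorPow B (B ⊗[A] M) d :=
  LinearMap.liftBaseChange B
    ((tensorPowCompare A M d B) ∘ₗ (symmetricTensors A M d).subtype)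

open Module

/-! ### Filtered quotients -/

section FilteredQuotient

variable {G R N N' : Type*} [Monoid G] [CommRing R] [AddCommGroup N] [Module R N]
  [AddCommGroup N'] [Module R N']

/-- The map `q : N → N'` presents `N'` as the filtered colimit of copies of `N` along the
endomorphisms `ρ g`: these become the identity on `N'`, and every element of the kernel of `q` is
killed by one of them. -/
structure IsFilteredQuotient (ρ : G →* End R N) (q : N →ₗ[R] N') : Prop where
  surjective : Function.Surjective q
  comp_eq (g : G) : q ∘ₗ ρ g = q
  exists_apply_eq_zero (n : N) (hn : q n = 0) : ∃ g, ρ g n = 0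

/-- The elements all of whose translates are killed by some `ρ g`. Quantifying over translates is
what makes them a submodule without any commutativity of `G`. -/
def eventualKer (ρ : G →* End R N) : Submodule R N where
  carrier := {n | ∀ h, ∃ g, ρ g (ρ h n) = 0}
  zero_mem' h := ⟨1, by simp⟩
  add_mem' {x y} hx hy h := by
    obtain ⟨g, hg⟩ := hx h
    obtain ⟨g', hg'⟩ := hy (g * h)
    rw [map_mul, End.mul_apply] at hg'
    exact ⟨g' * g, by simp [hg, hg']⟩
  smul_mem' c x hx h := by
    obtain ⟨g, hg⟩ := hx h
    exact ⟨g, by simp [hg]⟩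

namespace IsFilteredQuotient

variable {ρ : G →* End R N} {q : N →ₗ[R] N'}

lemma of_ker_le_eventualKer (hsurj : Function.Surjective q)
    (hcomp : ∀ g, q ∘ₗ ρ g = q) (hker : LinearMap.ker q ≤ eventualKer ρ) :
    IsFilteredQuotient ρ q where
  surjective := hsurj
  comp_eq := hcomp
  exists_apply_eq_zero n hn := by simpa using hker hn 1

lemma map_action_apply (hq : IsFilteredQuotient ρ q) (g : G) (n : N) : q (ρ g n) = q n :=
  LinearMap.congr_fun (hq.comp_eq g) n

lemma exists_forall_apply_eq_zero (hq : IsFilteredQuotient ρ q) {ι : Type*} [Finite ι]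
    (x : ι → N) (hx : ∀ i, q (x i) = 0) : ∃ g, ∀ i, ρ g (x i) = 0 := by
  classical
  have := Fintype.ofFinite ι
  suffices ∀ s : Finset ι, ∃ g, ∀ i ∈ s, ρ g (x i) = 0 by simpa using this Finset.univ
  intro s
  induction s using Finset.induction_on with
  | empty => exact ⟨1, by simp⟩
  | insert i s _ ih =>
    obtain ⟨g, hg⟩ := ih
    obtain ⟨g', hg'⟩ := hq.exists_apply_eq_zero (ρ g (x i)) (by rw [hq.map_action_apply, hx])
    exact ⟨g' * g, by simp +contextual [hg, hg']⟩

lemma exists_forall_apply_eq (hq : IsFilteredQuotient ρ q) {ι : Type*} [Finite ι]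
    (x y : ι → N) (hxy : ∀ i, q (x i) = q (y i)) : ∃ g, ∀ i, ρ g (x i) = ρ g (y i) := by
  simpa [sub_eq_zero] using hq.exists_forall_apply_eq_zero (x - y) (by simp [hxy])

protected theorem flat [Module.Flat R N] (hq : IsFilteredQuotient ρ q) : Module.Flat R N' := by
  refine Module.Flat.of_forall_isTrivialRelation fun {l f x} hfx => ?_
  choose t ht using fun i => hq.surjective (x i)
  obtain ⟨g, hg⟩ := hq.exists_apply_eq_zero (∑ i, f i • t i) (by simp [ht, hfx])
  have hrel : ∑ i, f i • ρ g (t i) = 0 := by simpa using hg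
  obtain ⟨k, a, y, hy, ha⟩ := Module.Flat.isTrivialRelation_of_sum_smul_eq_zero hrel
  refine ⟨k, a, fun j => q (y j), fun i => ?_, ha⟩
  rw [← ht i, ← hq.map_action_apply g, show ρ g (t i) = _ from hy i]
  simp

end IsFilteredQuotient

end FilteredQuotient

/-! ### Flat modules as filtered quotients of free modules -/

section Flat

variable {R P M : Type*} [CommRing R] [AddCommGroup P] [Module R P] [AddCommGroup M] [Module R M]

/-- The monoid of endomorphisms of `P` over `M`. For `M` flat, `P` free and `π` surjective, `M` is
the filtered colimit of copies of `P` along them. -/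
def endOver (π : P →ₗ[R] M) : Submonoid (End R P) where
  carrier := {e | π ∘ₗ e = π}
  one_mem' := π.comp_id
  mul_mem' {e f} he hf := by
    change π ∘ₗ e ∘ₗ f = π
    rw [← LinearMap.comp_assoc, he, hf]

/-- Write `p` in a basis of `P`. By flatness the resulting relation between the images of the basis
vectors is trivial, and moving these basis vectors accordingly gives the endomorphism. -/
theorem exists_endOver_apply_eq_zero [Module.Flat R M] [Module.Free R P] {π : P →ₗ[R] M}
    (hπ : Function.Surjective π) {p : P} (hp : π p = 0) : ∃ e ∈ endOver π, e p = 0 := by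
  classical
  let b := Module.Free.chooseBasis R P
  let s := (b.repr p).support
  have hsum : ∑ i : s, b.repr p i • b i = p := by
    rw [Finset.sum_coe_sort s fun i => b.repr p i • b i]
    exact b.linearCombination_repr p
  have hrel : ∑ i : s, b.repr p i • π (b i) = 0 := by
    simpa using (congrArg π hsum).trans hp
  obtain ⟨k, a, y, hy, ha⟩ := Module.Flat.isTrivialRelation_of_sum_smul_eq_zero hrel
  choose z hz using fun j => hπ (y j)
  let e : P →ₗ[R] P := b.constr R fun i => if h : i ∈ s then ∑ j, a ⟨i, h⟩ j • z j else b i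
  have he (i : s) : e (b i) = ∑ j, a i j • z j := by simp [e]
  refine ⟨e, b.ext fun i => ?_, ?_⟩
  · by_cases h : i ∈ s
    · simpa [he ⟨i, h⟩, hz] using (hy ⟨i, h⟩).symm
    · simp [e, h]
  · calc e p = ∑ i : s, b.repr p i • ∑ j, a i j • z j := by
          conv_lhs => rw [← hsum]
          simp [he]
      _ = ∑ j, (∑ i : s, b.repr p i * a i j) • z j := by
          simp only [Finset.smul_sum, Finset.sum_smul, smul_smul]
          exact Finset.sum_comm
      _ = 0 := Finset.sum_eq_zero fun j _ => by rw [ha j, zero_smul]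

theorem isFilteredQuotient_of_flat [Module.Flat R M] [Module.Free R P] {π : P →ₗ[R] M}
    (hπ : Function.Surjective π) : IsFilteredQuotient (endOver π).subtype π where
  surjective := hπ
  comp_eq e := e.2
  exists_apply_eq_zero _ hp := by
    obtain ⟨e, he, hep⟩ := exists_endOver_apply_eq_zero hπ hp
    exact ⟨⟨e, he⟩, hep⟩

end Flat

/-! ### Functoriality of tensor powers and symmetric tensors -/

section Functoriality

variable {R M N P : Type*} [CommRing R] [AddCommGroup M] [Module R M] [AddCommGroup N] [Module R N]
  [AddCommGroup P] [Module R P]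

/-- The map `f^{⊗d} : M^{⊗d} → N^{⊗d}` induced by a linear map `f : M → N`. -/
noncomputable def tensorPowMap (f : M →ₗ[R] N) (d : ℕ) : TensorPow R M d →ₗ[R] TensorPow R N d :=
  PiTensorProduct.map fun _ => f

@[simp]
lemma tensorPowMap_tprod (f : M →ₗ[R] N) {d : ℕ} (x : Fin d → M) :
    tensorPowMap f d (PiTensorProduct.tprod R x) = PiTensorProduct.tprod R fun i => f (x i) :=
  PiTensorProduct.map_tprod _ _

lemma tensorPowMap_comp (g : N →ₗ[R] P) (f : M →ₗ[R] N) (d : ℕ) :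
    tensorPowMap (g ∘ₗ f) d = tensorPowMap g d ∘ₗ tensorPowMap f d :=
  PiTensorProduct.map_comp _ _

lemma tensorPowMap_reindex (f : M →ₗ[R] N) {d : ℕ} (σ : Equiv.Perm (Fin d))
    (t : TensorPow R M d) :
    tensorPowMap f d (PiTensorProduct.reindex R (fun _ => M) σ t) =
      PiTensorProduct.reindex R (fun _ => N) σ (tensorPowMap f d t) :=
  PiTensorProduct.map_reindex (fun _ => f) σ t

lemma tensorPowMap_surjective {f : M →ₗ[R] N} (hf : Function.Surjective f) (d : ℕ) :
    Function.Surjective (tensorPowMap f d) := by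
  rw [← LinearMap.range_eq_top, eq_top_iff, ← PiTensorProduct.span_tprod_eq_top, Submodule.span_le]
  rintro _ ⟨y, rfl⟩
  choose x hx using fun i => hf (y i)
  exact ⟨PiTensorProduct.tprod R x, by simp [hx]⟩

/-- The map `TS^d(M) → TS^d(N)` induced by a linear map `f : M → N`. -/
noncomputable def symmetricTensorsMap (f : M →ₗ[R] N) (d : ℕ) :
    symmetricTensors R M d →ₗ[R] symmetricTensors R N d :=
  (tensorPowMap f d).restrict fun t ht σ => by rw [← tensorPowMap_reindex, ht σ]

@[simp]
lemma coe_symmetricTensorsMap (f : M →ₗ[R] N) {d : ℕ} (t : symmetricTensors R M d) :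
    (symmetricTensorsMap f d t : TensorPow R N d) = tensorPowMap f d t :=
  rfl

variable {G : Type*} [Monoid G]

/-- The diagonal action on `M^{⊗d}` induced by an action on `M`. -/
noncomputable def tensorPowAction (ρ : G →* End R M) (d : ℕ) : G →* End R (TensorPow R M d) :=
  PiTensorProduct.mapMonoidHom.comp (MonoidHom.pi fun _ => ρ)

lemma tensorPowAction_apply (ρ : G →* End R M) (d : ℕ) (g : G) :
    tensorPowAction ρ d g = tensorPowMap (ρ g) d :=
  rfl

/-- The restriction of `tensorPowAction` to symmetric tensors. -/
noncomputable def symmetricTensorsAction (ρ : G →* End R M) (d : ℕ) :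
    G →* End R (symmetricTensors R M d) where
  toFun g := symmetricTensorsMap (ρ g) d
  map_one' := by
    ext t : 2
    exact LinearMap.congr_fun (map_one (tensorPowAction ρ d)) t
  map_mul' g h := by
    ext t : 2
    exact LinearMap.congr_fun (map_mul (tensorPowAction ρ d) g h) t

/-- The action on `B ⊗ M` induced by an action on `M`. -/
noncomputable def baseChangeAction (ρ : G →* End R M) (B : Type*) [CommRing B] [Algebra R B] :
    G →* End B (B ⊗[R] M) where
  toFun g := (ρ g).baseChange B
  map_one' := by rw [map_one, LinearMap.baseChange_one]
  map_mul' g h := by rw [map_mul, LinearMap.baseChange_mul]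

lemma baseChangeAction_apply (ρ : G →* End R M) (B : Type*) [CommRing B] [Algebra R B] (g : G) :
    baseChangeAction ρ B g = (ρ g).baseChange B :=
  rfl

end Functoriality

/-! ### Operations on filtered quotients -/

lemma exists_compLinearMap_eq_of_surjective {ι R W : Type*} {M N : ι → Type*} [Semiring R]
    [∀ i, AddCommMonoid (M i)] [∀ i, Module R (M i)] [∀ i, AddCommMonoid (N i)]
    [∀ i, Module R (N i)] [AddCommMonoid W] [Module R W] {π : ∀ i, M i →ₗ[R] N i}
    (hπ : ∀ i, Function.Surjective (π i)) (f : MultilinearMap R M W)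
    (hf : ∀ x y, (∀ i, π i (x i) = π i (y i)) → f x = f y) :
    ∃ f' : MultilinearMap R N W, f'.compLinearMap π = f := by
  let lift (n : ∀ i, N i) : ∀ i, M i := fun i => Function.surjInv (hπ i) (n i)
  have lift_update [DecidableEq ι] (n : ∀ i, N i) (i : ι) (m : M i) :
      f (lift (Function.update n i (π i m))) = f (Function.update (lift n) i m) := by
    refine hf _ _ fun j => ?_
    rcases eq_or_ne j i with rfl | hj
    · simp [lift, Function.surjInv_eq]
    · simp [lift, hj]
  refine ⟨{ toFun n := f (lift n), map_update_add' := ?_, map_update_smul' := ?_ }, ?_⟩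
  · intro _ n i x y
    obtain ⟨x, rfl⟩ := hπ i x
    obtain ⟨y, rfl⟩ := hπ i y
    rw [← map_add]
    simp only [lift_update, MultilinearMap.map_update_add]
  · intro _ n i c x
    obtain ⟨x, rfl⟩ := hπ i x
    rw [← map_smul]
    simp only [lift_update, MultilinearMap.map_update_smul]
  · exact MultilinearMap.ext fun m => hf _ _ fun i => Function.surjInv_eq _ _

namespace IsFilteredQuotient

variable {G R N N' : Type*} [Monoid G] [CommRing R] [AddCommGroup N] [Module R N]
  [AddCommGroup N'] [Module R N'] {ρ : G →* End R N} {q : N →ₗ[R] N'}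

lemma tprod_sub_tprod_mem_eventualKer (hq : IsFilteredQuotient ρ q) {d : ℕ} {x y : Fin d → N}
    (hxy : ∀ i, q (x i) = q (y i)) :
    PiTensorProduct.tprod R x - PiTensorProduct.tprod R y ∈ eventualKer (tensorPowAction ρ d) := by
  intro h
  obtain ⟨g, hg⟩ := hq.exists_forall_apply_eq (fun i => ρ h (x i)) (fun i => ρ h (y i))
    (by simpa only [hq.map_action_apply] using hxy)
  exact ⟨g, by simp [tensorPowAction_apply, hg]⟩

/-- Modulo `eventualKer`, pure tensors on `N` only depend on their image in `N'`, so that the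
quotient map factors through `q^{⊗d}`. -/
protected theorem tensorPow (hq : IsFilteredQuotient ρ q) (d : ℕ) :
    IsFilteredQuotient (tensorPowAction ρ d) (tensorPowMap q d) := by
  refine of_ker_le_eventualKer (tensorPowMap_surjective hq.surjective d) (fun g => ?_) ?_
  · rw [tensorPowAction_apply, ← tensorPowMap_comp, hq.comp_eq]
  · let K := eventualKer (tensorPowAction ρ d)
    obtain ⟨f, hf⟩ := exists_compLinearMap_eq_of_surjective (fun _ : Fin d => hq.surjective)
      (K.mkQ.compMultilinearMap (PiTensorProduct.tprod R)) fun x y hxy =>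
        (Submodule.Quotient.eq K).2 (hq.tprod_sub_tprod_mem_eventualKer hxy)
    have hfactor : PiTensorProduct.lift f ∘ₗ tensorPowMap q d = K.mkQ := by
      ext x
      simpa using MultilinearMap.congr_fun hf x
    calc LinearMap.ker (tensorPowMap q d) ≤ LinearMap.ker K.mkQ :=
          hfactor ▸ LinearMap.ker_le_ker_comp _ _
      _ = K := K.ker_mkQ

protected theorem baseChange (hq : IsFilteredQuotient ρ q) (B : Type*) [CommRing B] [Algebra R B] :
    IsFilteredQuotient (baseChangeAction ρ B) (q.baseChange B) := by
  refine of_ker_le_eventualKer (LinearMap.lTensor_surjective B hq.surjective) (fun g => ?_) ?_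
  · rw [baseChangeAction_apply, ← LinearMap.baseChange_comp, hq.comp_eq]
  · intro z hz
    obtain ⟨w, rfl⟩ :=
      (lTensor_exact B (LinearMap.exact_subtype_ker_map q) hq.surjective z).1 hz
    clear hz
    induction w using TensorProduct.induction_on with
    | zero => simp
    | add x y hx hy => simpa only [map_add] using Submodule.add_mem _ hx hy
    | tmul b k =>
      intro h
      obtain ⟨g, hg⟩ := hq.exists_apply_eq_zero (ρ h k) ((hq.map_action_apply h k).trans k.2)
      exact ⟨g, by simp [baseChangeAction_apply, hg]⟩

lemma exists_mem_symmetricTensors_tensorPowMap_eq (hq : IsFilteredQuotient ρ q) {d : ℕ}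
    {x : TensorPow R N' d} (hx : x ∈ symmetricTensors R N' d) :
    ∃ t ∈ symmetricTensors R N d, tensorPowMap q d t = x := by
  obtain ⟨t, ht⟩ := tensorPowMap_surjective hq.surjective d x
  obtain ⟨g, hg⟩ := (hq.tensorPow d).exists_forall_apply_eq
    (fun σ => PiTensorProduct.reindex R (fun _ => N) σ t) (fun _ : Equiv.Perm (Fin d) => t)
    fun σ => by rw [tensorPowMap_reindex, ht, hx σ]
  refine ⟨tensorPowMap (ρ g) d t, fun σ => ?_, ((hq.tensorPow d).map_action_apply g t).trans ht⟩
  rw [← tensorPowMap_reindex]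
  exact hg σ

protected theorem symmetricTensors (hq : IsFilteredQuotient ρ q) (d : ℕ) :
    IsFilteredQuotient (symmetricTensorsAction ρ d) (symmetricTensorsMap q d) where
  surjective x := by
    obtain ⟨t, ht, htx⟩ := hq.exists_mem_symmetricTensors_tensorPowMap_eq x.2
    exact ⟨⟨t, ht⟩, Subtype.ext htx⟩
  comp_eq g := LinearMap.ext fun t => Subtype.ext ((hq.tensorPow d).map_action_apply g t)
  exists_apply_eq_zero t ht := by
    obtain ⟨g, hg⟩ := (hq.tensorPow d).exists_apply_eq_zero t (congrArg Subtype.val ht)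
    exact ⟨g, Subtype.ext hg⟩

theorem flat_symmetricTensors (hq : IsFilteredQuotient ρ q) {d : ℕ}
    [Module.Flat R (symmetricTensors R N d)] : Module.Flat R (symmetricTensors R N' d) :=
  (hq.symmetricTensors d).flat

end IsFilteredQuotient

/-! ### The base-change map -/

section BaseChange

variable {A M N B : Type*} [CommRing A] [AddCommGroup M] [Module A M] [AddCommGroup N] [Module A N]
  [CommRing B] [Algebra A B] {d : ℕ}

@[simp]
lemma tensorPowCompare_tprod (x : Fin d → M) :
    tensorPowCompare A M d B (PiTensorProduct.tprod A x) =
      PiTensorProduct.tprod B fun i => (1 : B) ⊗ₜ[A] x i := by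
  simp [tensorPowCompare]

lemma tensorPowMap_tensorPowCompare (f : M →ₗ[A] N) (t : TensorPow A M d) :
    tensorPowMap (f.baseChange B) d (tensorPowCompare A M d B t) =
      tensorPowCompare A N d B (tensorPowMap f d t) := by
  have h : (tensorPowMap (f.baseChange B) d).restrictScalars A ∘ₗ tensorPowCompare A M d B =
      tensorPowCompare A N d B ∘ₗ tensorPowMap f d := by
    ext x
    simp
  exact LinearMap.congr_fun h t

lemma reindex_tensorPowCompare (σ : Equiv.Perm (Fin d)) (t : TensorPow A M d) :
    PiTensorProduct.reindex B (fun _ => B ⊗[A] M) σ (tensorPowCompare A M d B t) =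
      tensorPowCompare A M d B (PiTensorProduct.reindex A (fun _ => M) σ t) := by
  have h : (PiTensorProduct.reindex B (fun _ => B ⊗[A] M) σ).toLinearMap.restrictScalars A ∘ₗ
      tensorPowCompare A M d B =
      tensorPowCompare A M d B ∘ₗ (PiTensorProduct.reindex A (fun _ => M) σ).toLinearMap := by
    ext x
    simp [PiTensorProduct.reindex_tprod]
  exact LinearMap.congr_fun h t

@[simp]
lemma symmetricTensorsBaseChange_tmul (b : B) (t : symmetricTensors A M d) :
    symmetricTensorsBaseChange A M d B (b ⊗ₜ t) = b • tensorPowCompare A M d B t := by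
  simp [symmetricTensorsBaseChange]

lemma symmetricTensorsBaseChange_eq_comp :
    symmetricTensorsBaseChange A M d B =
      (tensorPowCompare A M d B).liftBaseChange B ∘ₗ
        (symmetricTensors A M d).subtype.baseChange B := by
  ext t
  simp

lemma tensorPowMap_symmetricTensorsBaseChange (f : M →ₗ[A] N)
    (z : B ⊗[A] symmetricTensors A M d) :
    tensorPowMap (f.baseChange B) d (symmetricTensorsBaseChange A M d B z) =
      symmetricTensorsBaseChange A N d B ((symmetricTensorsMap f d).baseChange B z) := by
  induction z using TensorProduct.induction_on with
  | zero => simp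
  | tmul b t => simp [tensorPowMap_tensorPowCompare]
  | add x y hx hy => simp only [map_add, hx, hy]

lemma range_symmetricTensorsBaseChange_le :
    LinearMap.range (symmetricTensorsBaseChange A M d B) ≤
      symmetricTensors B (B ⊗[A] M) d := by
  rw [symmetricTensorsBaseChange, LinearMap.range_liftBaseChange, Submodule.span_le]
  rintro _ ⟨t, rfl⟩ σ
  simp [reindex_tensorPowCompare, t.2 σ]

namespace IsFilteredQuotient

variable {G : Type*} [Monoid G] {ρ : G →* End A N} {q : N →ₗ[A] M}

theorem symmetricTensorsBaseChange_injective (hq : IsFilteredQuotient ρ q)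
    (hN : Function.Injective (symmetricTensorsBaseChange A N d B)) :
    Function.Injective (symmetricTensorsBaseChange A M d B) := by
  have hsymm := (hq.symmetricTensors d).baseChange B
  rw [injective_iff_map_eq_zero]
  intro z hz
  obtain ⟨w, rfl⟩ := hsymm.surjective z
  rw [← tensorPowMap_symmetricTensorsBaseChange] at hz
  obtain ⟨g, hg⟩ := ((hq.baseChange B).tensorPow d).exists_apply_eq_zero _ hz
  have hgw : (symmetricTensorsMap (ρ g) d).baseChange B w = 0 := by
    apply hN
    rw [← tensorPowMap_symmetricTensorsBaseChange, map_zero]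
    exact hg
  calc (symmetricTensorsMap q d).baseChange B w
      = (symmetricTensorsMap q d).baseChange B ((symmetricTensorsMap (ρ g) d).baseChange B w) :=
        (hsymm.map_action_apply g w).symm
    _ = 0 := by rw [hgw, map_zero]

theorem symmetricTensors_le_range (hq : IsFilteredQuotient ρ q)
    (hN : symmetricTensors B (B ⊗[A] N) d ≤
      LinearMap.range (symmetricTensorsBaseChange A N d B)) :
    symmetricTensors B (B ⊗[A] M) d ≤
      LinearMap.range (symmetricTensorsBaseChange A M d B) := by
  intro x hx
  obtain ⟨t, ht, rfl⟩ := (hq.baseChange B).exists_mem_symmetricTensors_tensorPowMap_eq hx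
  obtain ⟨z, rfl⟩ := hN ht
  exact ⟨_, (tensorPowMap_symmetricTensorsBaseChange q z).symm⟩

end IsFilteredQuotient

end BaseChange

/-! ### Free modules -/

section Free

variable {R P ι : Type*} [CommRing R] [AddCommGroup P] [Module R P]

/-- The basis of `P^{⊗d}` formed by the pure tensors in the vectors of a basis of `P`. -/
noncomputable abbrev tensorPowBasis (b : Basis ι R P) (d : ℕ) :
    Basis (Fin d → ι) R (TensorPow R P d) :=
  Basis.piTensorProduct fun _ => b

lemma tensorPowBasis_repr_reindex (b : Basis ι R P) {d : ℕ} (σ : Equiv.Perm (Fin d))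
    (t : TensorPow R P d) (φ : Fin d → ι) :
    (tensorPowBasis b d).repr (PiTensorProduct.reindex R (fun _ => P) σ t) φ =
      (tensorPowBasis b d).repr t (φ ∘ σ) := by
  have h : (tensorPowBasis b d).coord φ ∘ₗ
      (PiTensorProduct.reindex R (fun _ => P) σ).toLinearMap =
      (tensorPowBasis b d).coord (φ ∘ σ) := by
    ext x
    simp only [LinearMap.compMultilinearMap_apply, LinearMap.comp_apply, LinearEquiv.coe_coe,
      PiTensorProduct.reindex_tprod, Basis.coord_apply, Basis.piTensorProduct_repr_tprod_apply]
    exact Fintype.prod_equiv σ.symm _ _ fun i => by simp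
  exact LinearMap.congr_fun h t

section Sorting

variable [LinearOrder ι]

lemma finite_support_comp_sort {W : Type*} [Zero W] {d : ℕ} (c : (Fin d → ι) →₀ W) :
    (Function.support fun φ : Fin d → ι => c (φ ∘ Tuple.sort φ)).Finite := by
  refine (c.support.finite_toSet.image2 (fun ψ (σ : Equiv.Perm (Fin d)) => ψ ∘ σ)
    Set.finite_univ).subset fun φ hφ => ?_
  exact ⟨φ ∘ Tuple.sort φ, by simpa using hφ, (Tuple.sort φ).symm, trivial, by ext; simp⟩

/-- The projection of `P^{⊗d}` onto `TS^d(P)` attached to a basis of `P` with an ordered index set: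
in coordinates, it replaces the coefficient at each word by the one at the sorted word. -/
noncomputable def symmetricTensorsProj (b : Basis ι R P) (d : ℕ) :
    TensorPow R P d →ₗ[R] TensorPow R P d where
  toFun t := (tensorPowBasis b d).repr.symm
    (Finsupp.ofSupportFinite _ (finite_support_comp_sort ((tensorPowBasis b d).repr t)))
  map_add' s t := (tensorPowBasis b d).ext_elem fun φ => by
    simp [Finsupp.ofSupportFinite_coe]
  map_smul' c t := (tensorPowBasis b d).ext_elem fun φ => by
    simp [Finsupp.ofSupportFinite_coe]

lemma tensorPowBasis_repr_symmetricTensorsProj (b : Basis ι R P) {d : ℕ} (t : TensorPow R P d)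
    (φ : Fin d → ι) :
    (tensorPowBasis b d).repr (symmetricTensorsProj b d t) φ =
      (tensorPowBasis b d).repr t (φ ∘ Tuple.sort φ) := by
  simp [symmetricTensorsProj, Finsupp.ofSupportFinite_coe]

theorem isProj_symmetricTensorsProj (b : Basis ι R P) (d : ℕ) :
    LinearMap.IsProj (symmetricTensors R P d) (symmetricTensorsProj b d) where
  map_mem t σ := (tensorPowBasis b d).ext_elem fun φ => by
    rw [tensorPowBasis_repr_reindex, tensorPowBasis_repr_symmetricTensorsProj,
      tensorPowBasis_repr_symmetricTensorsProj, Tuple.comp_perm_comp_sort_eq_comp_sort]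
  map_id t ht := (tensorPowBasis b d).ext_elem fun φ => by
    rw [tensorPowBasis_repr_symmetricTensorsProj, ← tensorPowBasis_repr_reindex, ht]

lemma codRestrict_symmetricTensorsProj_comp_subtype (b : Basis ι R P) (d : ℕ) :
    (isProj_symmetricTensorsProj b d).codRestrict ∘ₗ (symmetricTensors R P d).subtype =
      LinearMap.id :=
  LinearMap.ext (isProj_symmetricTensorsProj b d).codRestrict_apply_cod

end Sorting

theorem flat_symmetricTensors_of_basis (b : Basis ι R P) (d : ℕ) :
    Module.Flat R (symmetricTensors R P d) := by
  obtain ⟨_, _⟩ := exists_wellFoundedLT ι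
  have : Module.Free R (TensorPow R P d) := Module.Free.of_basis (tensorPowBasis b d)
  exact Module.Flat.of_retract _ _ (codRestrict_symmetricTensorsProj_comp_subtype b d)

variable {B : Type*} [CommRing B] [Algebra R B]

lemma tensorPowBasis_repr_tensorPowCompare (b : Basis ι R P) {d : ℕ} (t : TensorPow R P d)
    (φ : Fin d → ι) :
    (tensorPowBasis (b.baseChange B) d).repr (tensorPowCompare R P d B t) φ =
      algebraMap R B ((tensorPowBasis b d).repr t φ) := by
  have h : ((tensorPowBasis (b.baseChange B) d).coord φ).restrictScalars R ∘ₗ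
      tensorPowCompare R P d B = Algebra.linearMap R B ∘ₗ (tensorPowBasis b d).coord φ := by
    ext x
    simp [Algebra.algebraMap_eq_smul_one]
  exact LinearMap.congr_fun h t

theorem liftBaseChange_tensorPowCompare_bijective (b : Basis ι R P) (d : ℕ) :
    Function.Bijective ((tensorPowCompare R P d B).liftBaseChange B) := by
  have h : (tensorPowCompare R P d B).liftBaseChange B =
      (((tensorPowBasis b d).baseChange B).equiv (tensorPowBasis (b.baseChange B) d)
        (Equiv.refl _)).toLinearMap :=
    ((tensorPowBasis b d).baseChange B).ext fun φ => by
      rw [LinearEquiv.coe_coe, Basis.equiv_apply]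
      simp
  rw [h]
  exact LinearEquiv.bijective _

lemma symmetricTensorsProj_liftBaseChange [LinearOrder ι] (b : Basis ι R P) {d : ℕ}
    (w : B ⊗[R] TensorPow R P d) :
    symmetricTensorsProj (b.baseChange B) d ((tensorPowCompare R P d B).liftBaseChange B w) =
      (tensorPowCompare R P d B).liftBaseChange B ((symmetricTensorsProj b d).baseChange B w) := by
  have h : symmetricTensorsProj (b.baseChange B) d ∘ₗ (tensorPowCompare R P d B).liftBaseChange B =
      (tensorPowCompare R P d B).liftBaseChange B ∘ₗ (symmetricTensorsProj b d).baseChange B := by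
    refine TensorProduct.AlgebraTensorModule.curry_injective (LinearMap.ext_ring ?_)
    refine LinearMap.ext fun t => (tensorPowBasis (b.baseChange B) d).ext_elem fun φ => ?_
    simp [tensorPowBasis_repr_symmetricTensorsProj, tensorPowBasis_repr_tensorPowCompare,
      -Basis.baseChange_apply]
  exact LinearMap.congr_fun h w

theorem symmetricTensorsBaseChange_injective_of_basis (b : Basis ι R P) (d : ℕ) :
    Function.Injective (symmetricTensorsBaseChange R P d B) := by
  obtain ⟨_, _⟩ := exists_wellFoundedLT ι
  have hretract : (isProj_symmetricTensorsProj b d).codRestrict.baseChange B ∘ₗ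
      (symmetricTensors R P d).subtype.baseChange B = LinearMap.id := by
    rw [← LinearMap.baseChange_comp, codRestrict_symmetricTensorsProj_comp_subtype,
      LinearMap.baseChange_id]
  rw [symmetricTensorsBaseChange_eq_comp, LinearMap.coe_comp]
  exact (liftBaseChange_tensorPowCompare_bijective b d).1.comp
    (Function.LeftInverse.injective (LinearMap.congr_fun hretract))

theorem symmetricTensors_le_range_of_basis (b : Basis ι R P) (d : ℕ) :
    symmetricTensors B (B ⊗[R] P) d ≤
      LinearMap.range (symmetricTensorsBaseChange R P d B) := by
  obtain ⟨_, _⟩ := exists_wellFoundedLT ι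
  intro x hx
  obtain ⟨w, rfl⟩ := (liftBaseChange_tensorPowCompare_bijective b d).2 x
  have hproj := isProj_symmetricTensorsProj b d
  have hw : (symmetricTensors R P d).subtype.baseChange B (hproj.codRestrict.baseChange B w) =
      (symmetricTensorsProj b d).baseChange B w := by
    rw [← LinearMap.comp_apply, ← LinearMap.baseChange_comp, hproj.subtype_comp_codRestrict]
  refine ⟨hproj.codRestrict.baseChange B w, ?_⟩
  rw [symmetricTensorsBaseChange_eq_comp, LinearMap.comp_apply, hw,
    ← symmetricTensorsProj_liftBaseChange]
  exact (isProj_symmetricTensorsProj (b.baseChange B) d).map_id _ hx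

end Free

/-- Let `M` be a flat `A`-module and `d ≥ 0`. Then `TS^d_A(M)` is a flat `A`-module, and for
every commutative `A`-algebra `B` the canonical `B`-linear base-change homomorphism
`TS^d_A(M) ⊗_A B ⟶ TS^d_B(M ⊗_A B)` is bijective; equivalently, the base-change map
`symmetricTensorsBaseChange` is injective with image exactly `TS^d_B(B ⊗_A M)`. -/
theorem symmetricTensors_flat_baseChange (A : Type*) [CommRing A] (M : Type*) [AddCommGroup M]
    [Module A M] (d : ℕ) [Module.Flat A M] :
    Module.Flat A (symmetricTensors A M d) ∧
    ∀ (B : Type*) [CommRing B] [Algebra A B],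
      Function.Injective (symmetricTensorsBaseChange A M d B) ∧
      LinearMap.range (symmetricTensorsBaseChange A M d B) =
        symmetricTensors B (B ⊗[A] M) d := by
  let b : Basis M A (M →₀ A) := Finsupp.basisSingleOne
  let π : (M →₀ A) →ₗ[A] M := Finsupp.linearCombination A id
  have hq : IsFilteredQuotient (endOver π).subtype π :=
    isFilteredQuotient_of_flat (Finsupp.linearCombination_id_surjective A M)
  refine ⟨?_, fun B _ _ => ⟨?_, le_antisymm ?_ ?_⟩⟩
  · have := flat_symmetricTensors_of_basis b d
    exact hq.flat_symmetricTensors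
  · exact hq.symmetricTensorsBaseChange_injective
      (symmetricTensorsBaseChange_injective_of_basis b d)
  · exact range_symmetricTensorsBaseChange_le
  · exact hq.symmetricTensors_le_range (symmetricTensors_le_range_of_basis b d)
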